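/- arXiv:1706.04048 — 2 statements merged into one kernel-verified Lean document; each statement's English description precedes it below -/
import Mathlib

section
/- Let ν, η : ℝ → ℝⁿ → ℝⁿ be time-dependent vector fields such that for each t ∈ [0,1] the maps ν(t,·) and η(t,·) are continuously differentiable, bounded by b(t), and have spatial derivatives bounded by ℓ(t), with ℓ, b integrable on [0,1] and measurable dependence on t. For each ε ∈ ℝ let φ^ε(s,t,x) denote the value at time t of the unique solution of ψ(t) = x + ∫_s^t (ν + εη)(r, ψ(r)) dr, and write φ = φ⁰; assume each map x ↦ φ(s,t,x) is continuously differentiable with spatial derivative Dφ(s,t,·). Then for all s, t ∈ [0,1] and x ∈ ℝⁿ, the map ε ↦ φ^ε(s,t,x) is differentiable at ε = 0 with derivative ∫_s^t Dφ(τ,t, φ(s,τ,x)) ( η(τ, φ(s,τ,x)) ) dτ. -/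
open MeasureTheory Set Filter

lemma fd_ac_of_dom {E : Type*} [NormedAddCommGroup E] {f : ℝ → E} {g : ℝ → ℝ} {a b K : ℝ}
    (hg : AbsolutelyContinuousOnInterval g a b)
    (h : ∀ x ∈ uIcc a b, ∀ y ∈ uIcc a b, dist (f x) (f y) ≤ K * dist (g x) (g y)) :
    AbsolutelyContinuousOnInterval f a b := by
  unfold AbsolutelyContinuousOnInterval at hg ⊢
  have h2 := hg.const_mul K
  rw [mul_zero] at h2
  refine squeeze_zero' ?_ ?_ h2
  · exact Eventually.of_forall fun t => Finset.sum_nonneg (fun i hi => dist_nonneg)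
  · filter_upwards [mem_inf_of_right (mem_principal_self _)] with E hE
    rw [Finset.mul_sum]
    exact Finset.sum_le_sum fun i hi => h _ (hE.1 i hi).1 _ (hE.1 i hi).2

lemma fd_exp_lip {x y : ℝ} (hx : 0 ≤ x) (hy : 0 ≤ y) :
    dist (Real.exp (-x)) (Real.exp (-y)) ≤ 1 * dist x y := by
  have key : ∀ x y : ℝ, 0 ≤ x → x ≤ y → dist (Real.exp (-x)) (Real.exp (-y)) ≤ 1 * dist x y := by
    intro x y hx hxy
    have h1 : Real.exp (-y) ≤ Real.exp (-x) := Real.exp_le_exp.2 (by linarith)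
    rw [Real.dist_eq, Real.dist_eq, abs_of_nonneg (by linarith), abs_of_nonpos (by linarith)]
    have h2 : Real.exp (-y) = Real.exp (-x) * Real.exp (x - y) := by
      rw [← Real.exp_add]; ring_nf
    have h3 := Real.add_one_le_exp (x - y)
    have h4 : Real.exp (-x) ≤ 1 := Real.exp_le_one_iff.2 (by linarith)
    have h5 := Real.exp_pos (-x)
    rw [h2]
    nlinarith
  rcases le_total x y with h | h
  · exact key x y hx h
  · rw [dist_comm, dist_comm x y]; exact key y x hy h

lemma fd_gronwall {a c A : ℝ} {u ℓ : ℝ → ℝ} (hac : a ≤ c) (hA : 0 ≤ A)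
    (hℓ : IntervalIntegrable ℓ volume a c) (hℓ0 : ∀ r ∈ Icc a c, 0 ≤ ℓ r)
    (hu : ContinuousOn u (Icc a c))
    (h : ∀ r ∈ Icc a c, u r ≤ A + ∫ q in a..r, ℓ q * u q) :
    ∀ r ∈ Icc a c, u r ≤ A * Real.exp (∫ q in a..c, ℓ q) := by
  intro r hr
  have hsub : uIcc a r ⊆ uIcc a c := by
    rw [uIcc_of_le hac, uIcc_of_le hr.1]; exact Icc_subset_Icc_right hr.2
  have hsub' : uIcc r c ⊆ uIcc a c := by
    rw [uIcc_of_le hac, uIcc_of_le hr.2]; exact Icc_subset_Icc_left hr.1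
  have hℓu : IntervalIntegrable (fun q => ℓ q * u q) volume a c :=
    hℓ.mul_continuousOn (by rwa [uIcc_of_le hac])
  have hℓr := hℓ.mono_set hsub
  have hℓur := hℓu.mono_set hsub
  set g : ℝ → ℝ := fun r => A + ∫ q in a..r, ℓ q * u q with hg
  set L : ℝ → ℝ := fun r => ∫ q in a..r, ℓ q with hL
  have hL0 : ∀ q ∈ Icc a c, 0 ≤ L q := fun q hq =>
    intervalIntegral.integral_nonneg hq.1 fun p hp => hℓ0 p ⟨hp.1, hp.2.trans hq.2⟩
  have hgac0 : AbsolutelyContinuousOnInterval (fun r => ∫ q in a..r, ℓ q * u q) a r :=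
    hℓur.absolutelyContinuousOnInterval_intervalIntegral left_mem_uIcc
  have hgac : AbsolutelyContinuousOnInterval g a r :=
    fd_ac_of_dom (K := 1) hgac0 (fun x _ y _ => by simp [g])
  have hLac : AbsolutelyContinuousOnInterval L a r :=
    hℓr.absolutelyContinuousOnInterval_intervalIntegral left_mem_uIcc
  set e : ℝ → ℝ := fun r => Real.exp (-L r) with he
  have heac : AbsolutelyContinuousOnInterval e a r := by
    refine fd_ac_of_dom (K := 1) hLac fun x hx y hy => ?_
    rw [← uIcc_of_le hac] at hL0
    exact fd_exp_lip (hL0 x (hsub hx)) (hL0 y (hsub hy))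
  have hint := hgac.integral_deriv_mul_eq_sub heac
  have hneg : 0 ≤ ∫ x in a..r, -(deriv g x * e x + g x * deriv e x) := by
    refine intervalIntegral.integral_nonneg_of_ae_restrict hr.1 ?_
    rw [EventuallyLE, ae_restrict_iff' measurableSet_Icc]
    filter_upwards [hℓr.ae_hasDerivAt_integral, hℓur.ae_hasDerivAt_integral] with x h1 h2 hx
    have hx' : x ∈ uIcc a r := by rwa [uIcc_of_le hr.1]
    have hx2 : x ∈ Icc a c := ⟨hx.1, hx.2.trans hr.2⟩
    have d1 : HasDerivAt L (ℓ x) x := h1 hx' a left_mem_uIcc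
    have d2 : HasDerivAt g (ℓ x * u x) x := (h2 hx' a left_mem_uIcc).const_add A
    have d3 : HasDerivAt e (Real.exp (-L x) * (-ℓ x)) x := d1.neg.exp
    rw [d2.deriv, d3.deriv]
    have e0 : 0 < Real.exp (-L x) := Real.exp_pos _
    have := h x hx2
    have l0 := hℓ0 x hx2
    have : 0 ≤ ℓ x * Real.exp (-L x) * (g x - u x) :=
      mul_nonneg (mul_nonneg l0 e0.le) (by simp only [hg]; linarith)
    simp only [he, Pi.zero_apply]
    linarith
  rw [intervalIntegral.integral_neg, hint] at hneg
  have ga : g a = A := by simp [hg]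
  have ea : e a = 1 := by simp [he, hL]
  rw [ga, ea] at hneg
  have h1 : g r * e r ≤ A := by linarith
  have h2 : g r ≤ A * Real.exp (L r) := by
    have : g r = g r * e r * Real.exp (L r) := by
      simp only [he]; rw [mul_assoc, ← Real.exp_add]; simp
    rw [this]; gcongr
  have h3 : L r ≤ L c := by
    have : L c - L r = ∫ q in r..c, ℓ q :=
      intervalIntegral.integral_interval_sub_left hℓ hℓr
    have h0 : 0 ≤ ∫ q in r..c, ℓ q :=
      intervalIntegral.integral_nonneg hr.2 fun p hp => hℓ0 p ⟨hr.1.trans hp.1, hp.2⟩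
    linarith
  calc u r ≤ g r := h r hr
    _ ≤ _ := h2
    _ ≤ A * Real.exp (L c) := by gcongr

lemma fd_ii {E : Type*} [NormedAddCommGroup E] {f : ℝ → E} (hf : IntegrableOn f (Icc (0:ℝ) 1)) {s t : ℝ}
    (hs : s ∈ Icc (0:ℝ) 1) (ht : t ∈ Icc (0:ℝ) 1) : IntervalIntegrable f volume s t :=
  IntegrableOn.intervalIntegrable (hf.mono_set (uIcc_subset_Icc hs ht))

lemma fd_gronwall_abs {s t A : ℝ} {u ℓ : ℝ → ℝ} (hA : 0 ≤ A)
    (hs : s ∈ Icc (0:ℝ) 1) (ht : t ∈ Icc (0:ℝ) 1)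
    (hℓ : IntegrableOn ℓ (Icc (0:ℝ) 1)) (hℓ0 : ∀ r ∈ Icc (0:ℝ) 1, 0 ≤ ℓ r)
    (hu : ContinuousOn u (uIcc s t))
    (h : ∀ r ∈ uIcc s t, u r ≤ A + |∫ q in s..r, ℓ q * u q|) (hu0 : ∀ r, 0 ≤ u r) :
    ∀ r ∈ uIcc s t, u r ≤ A * Real.exp (∫ q in (0:ℝ)..1, ℓ q) := by
  have hmono : ∀ a c : ℝ, a ≤ c → a ∈ Icc (0:ℝ) 1 → c ∈ Icc (0:ℝ) 1 →
      ∫ q in a..c, ℓ q ≤ ∫ q in (0:ℝ)..1, ℓ q := by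
    intro a c hac ha hc
    refine intervalIntegral.integral_mono_interval ha.1 hac hc.2 ?_ (fd_ii hℓ (by simp) (by simp))
    rw [EventuallyLE, ae_restrict_iff' measurableSet_Ioc]
    exact Eventually.of_forall fun x hx => hℓ0 x ⟨hx.1.le, hx.2⟩
  intro r hr
  rcases le_total s t with hst | hst
  · rw [uIcc_of_le hst] at *
    have := fd_gronwall hst hA (fd_ii hℓ hs ht) (fun r hr => hℓ0 r ⟨hs.1.trans hr.1, hr.2.trans ht.2⟩)
      hu (fun r hr => by
        have h0 : 0 ≤ ∫ q in s..r, ℓ q * u q := intervalIntegral.integral_nonneg hr.1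
          fun p hp => mul_nonneg (hℓ0 p ⟨hs.1.trans hp.1, hp.2.trans (hr.2.trans ht.2)⟩) (hu0 p)
        have := h r hr
        rwa [abs_of_nonneg h0] at this) r hr
    refine this.trans ?_
    gcongr
    exact hmono s t hst hs ht
  · rw [uIcc_of_ge hst] at *
    have := fd_gronwall (a := -s) (c := -t) (u := fun q => u (-q)) (ℓ := fun q => ℓ (-q))
      (by linarith) hA ((IntervalIntegrable.iff_comp_neg (by simp)).1 (fd_ii hℓ hs ht))
      (fun r hr => hℓ0 _ ⟨by linarith [hr.2, ht.1], by linarith [hr.1, hs.2]⟩)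
      (hu.comp continuous_neg.continuousOn (fun q hq => ⟨by linarith [hq.2], by linarith [hq.1]⟩))
      (fun r hr => by
        have hr' : -r ∈ Icc t s := ⟨by linarith [hr.2], by linarith [hr.1]⟩
        have h0 : 0 ≤ ∫ q in (-r)..s, ℓ q * u q := intervalIntegral.integral_nonneg hr'.2
          fun p hp => mul_nonneg (hℓ0 p ⟨ht.1.trans (hr'.1.trans hp.1), hp.2.trans hs.2⟩) (hu0 p)
        have := h (-r) hr'
        rw [intervalIntegral.integral_symm, abs_neg, abs_of_nonneg h0] at this
        rw [intervalIntegral.integral_comp_neg (fun q => ℓ q * u q), neg_neg]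
        exact this) (-r) ⟨by linarith [hr.2], by linarith [hr.1]⟩
    rw [intervalIntegral.integral_comp_neg ℓ] at this
    simp only [neg_neg] at this
    refine this.trans ?_
    gcongr
    exact hmono t s hst ht hs

lemma fd_meas {E : Type*} [NormedAddCommGroup E] {ν : ℝ → E → E} {ψ : ℝ → E} {S : Set ℝ}
    (hS : MeasurableSet S)
    (hmeas : ∀ x, AEStronglyMeasurable (fun t => ν t x) (volume.restrict S))
    (hc : ∀ t ∈ S, Continuous (ν t)) (hψ : ContinuousOn ψ S) [SecondCountableTopology E] :
    AEStronglyMeasurable (fun t => ν t (ψ t)) (volume.restrict S) := by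
  borelize E
  have hψm : AEStronglyMeasurable ψ (volume.restrict S) := hψ.aestronglyMeasurable hS
  set m := hψm.mk ψ with hm
  have hsm : StronglyMeasurable m := hψm.stronglyMeasurable_mk
  refine aestronglyMeasurable_of_tendsto_ae atTop (f := fun k t => ν t (hsm.approx k t)) ?_ ?_
  · intro k
    have hcov : (⋃ x : (hsm.approx k).range, (hsm.approx k) ⁻¹' {x.1}) = univ := by
      ext t; simp
    rw [← Measure.restrict_univ (μ := volume.restrict S), ← hcov, aestronglyMeasurable_iUnion_iff]
    intro x
    refine ((hmeas x.1).mono_measure Measure.restrict_le_self).congr ?_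
    filter_upwards [ae_restrict_mem ((hsm.approx k).measurableSet_fiber x.1)] with t ht
    have : hsm.approx k t = x.1 := ht
    simp [this]
  · filter_upwards [hψm.ae_eq_mk, ae_restrict_mem hS] with t h1 h2
    rw [h1]
    exact ((hc t h2).tendsto _).comp (hsm.tendsto_approx t)

lemma fd_ftc {E : Type*} [NormedAddCommGroup E] [NormedSpace ℝ E] [CompleteSpace E]
    [SecondCountableTopology E] {F G : ℝ → E} {b : ℝ → ℝ} {s t K : ℝ} (hK : 0 ≤ K)
    (hb : IntervalIntegrable b volume s t)
    (hF : ∀ x ∈ uIcc s t, ∀ y ∈ uIcc s t, ‖F x - F y‖ ≤ K * |∫ q in y..x, b q|)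
    (hder : ∀ᵐ x, x ∈ uIcc s t → HasDerivAt F (G x) x)
    (hG : ∀ x ∈ uIcc s t, ‖G x‖ ≤ K * b x) :
    AEStronglyMeasurable G (volume.restrict (uIoc s t)) ∧ ∫ x in s..t, G x = F t - F s := by
  have hm : AEStronglyMeasurable G (volume.restrict (uIoc s t)) := by
    refine (aestronglyMeasurable_deriv F _).congr ?_
    rw [EventuallyEq, ae_restrict_iff' measurableSet_uIoc]
    filter_upwards [hder] with x hx hx'
    exact (hx (uIoc_subset_uIcc hx')).deriv
  refine ⟨hm, ?_⟩
  have hGi : IntervalIntegrable G volume s t := by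
    refine (hb.const_mul K).mono_fun hm ?_
    rw [EventuallyLE, ae_restrict_iff' measurableSet_uIoc]
    exact Eventually.of_forall fun x hx =>
      (hG x (uIoc_subset_uIcc hx)).trans (le_abs_self _)
  have hbac := hb.absolutelyContinuousOnInterval_intervalIntegral (c := s) left_mem_uIcc
  have hsub : ∀ x ∈ uIcc s t, uIcc s x ⊆ uIcc s t := fun x hx =>
    uIcc_subset_uIcc left_mem_uIcc hx
  have hbd : ∀ x ∈ uIcc s t, ∀ y ∈ uIcc s t,
      dist (∫ q in s..x, b q) (∫ q in s..y, b q) = |∫ q in y..x, b q| := fun x hx y hy => by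
    rw [Real.dist_eq, intervalIntegral.integral_interval_sub_left (hb.mono_set (hsub x hx))
      (hb.mono_set (hsub y hy))]
  have hac : AbsolutelyContinuousOnInterval (fun x => F x - ∫ q in s..x, G q) s t := by
    refine AbsolutelyContinuousOnInterval.sub (f := F) (g := fun x => ∫ q in s..x, G q)
      (fd_ac_of_dom (K := K) hbac ?_) (fd_ac_of_dom (K := K) hbac ?_)
    · intro x hx y hy
      rw [hbd x hx y hy, dist_eq_norm]
      exact hF x hx y hy
    · intro x hx y hy
      rw [hbd x hx y hy, dist_eq_norm, intervalIntegral.integral_interval_sub_left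
        (hGi.mono_set (hsub x hx)) (hGi.mono_set (hsub y hy))]
      have hyx : uIcc y x ⊆ uIcc s t := uIcc_subset_uIcc hy hx
      have := intervalIntegral.norm_integral_le_abs_of_norm_le (a := y) (b := x) (f := G)
        (g := fun q => K * b q) (μ := volume) (by
          rw [ae_restrict_iff' measurableSet_uIoc]
          exact Eventually.of_forall fun q hq => hG q (hyx (uIoc_subset_uIcc hq)))
        ((hb.mono_set hyx).const_mul K)
      rwa [intervalIntegral.integral_const_mul, abs_mul, abs_of_nonneg hK] at this
  obtain ⟨C, hC⟩ := hac.const_of_ae_hasDerivAt_zero (by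
    filter_upwards [hder, hGi.ae_hasDerivAt_integral] with x h1 h2 hx
    simpa using (h1 hx).fun_sub (h2 hx s left_mem_uIcc))
  have h1 := hC s left_mem_uIcc
  have h2 := hC t right_mem_uIcc
  simp only [intervalIntegral.integral_same, sub_zero] at h1
  rw [h1, ← h2]; abel

lemma fd_int {E : Type*} [NormedAddCommGroup E] [SecondCountableTopology E]
    {ν : ℝ → E → E} {b : ℝ → ℝ} {ψ : ℝ → E}
    (hbint : IntegrableOn b (Icc (0:ℝ) 1))
    (hmeas : ∀ x, AEStronglyMeasurable (fun t => ν t x) (volume.restrict (Icc (0:ℝ) 1)))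
    (hc : ∀ t ∈ Icc (0:ℝ) 1, Continuous (ν t))
    (hbd : ∀ t ∈ Icc (0:ℝ) 1, ∀ x, ‖ν t x‖ ≤ b t)
    (hψ : ContinuousOn ψ (Icc (0:ℝ) 1)) :
    IntegrableOn (fun t => ν t (ψ t)) (Icc (0:ℝ) 1) := by
  refine Integrable.mono' hbint (fd_meas measurableSet_Icc hmeas hc hψ) ?_
  filter_upwards [ae_restrict_mem measurableSet_Icc] with t ht
  exact hbd t ht _

lemma fd_bound {E : Type*} [NormedAddCommGroup E] [NormedSpace ℝ E]
    {f : ℝ → E} {g : ℝ → ℝ} {s t : ℝ}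
    (hg : IntervalIntegrable g volume s t) (h : ∀ r ∈ uIcc s t, ‖f r‖ ≤ g r) :
    ‖∫ q in s..t, f q‖ ≤ |∫ q in s..t, g q| := by
  refine intervalIntegral.norm_integral_le_abs_of_norm_le ?_ hg
  rw [ae_restrict_iff' measurableSet_uIoc]
  exact Eventually.of_forall fun q hq => h q (uIoc_subset_uIcc hq)

lemma fd_stab {E : Type*} [NormedAddCommGroup E] [NormedSpace ℝ E] [SecondCountableTopology E]
    {ν : ℝ → E → E} {ℓ : ℝ → ℝ} {ψ χ : ℝ → E} {s t δ : ℝ} (hδ : 0 ≤ δ)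
    (hs : s ∈ Icc (0:ℝ) 1) (ht : t ∈ Icc (0:ℝ) 1)
    (hℓ : IntegrableOn ℓ (Icc (0:ℝ) 1)) (hℓ0 : ∀ r ∈ Icc (0:ℝ) 1, 0 ≤ ℓ r)
    (hLip : ∀ t ∈ Icc (0:ℝ) 1, ∀ x y, ‖ν t x - ν t y‖ ≤ ℓ t * ‖x - y‖)
    (hψ : ContinuousOn ψ (Icc (0:ℝ) 1)) (hχ : ContinuousOn χ (Icc (0:ℝ) 1))
    (h : ∀ r ∈ uIcc s t, ‖ψ r - χ r - ∫ q in s..r, (ν q (ψ q) - ν q (χ q))‖ ≤ δ) :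
    ∀ r ∈ uIcc s t, ‖ψ r - χ r‖ ≤ δ * Real.exp (∫ q in (0:ℝ)..1, ℓ q) := by
  have hsub := uIcc_subset_Icc hs ht
  have hcu : ContinuousOn (fun r => ‖ψ r - χ r‖) (Icc (0:ℝ) 1) := (hψ.sub hχ).norm
  refine fd_gronwall_abs (u := fun r => ‖ψ r - χ r‖) hδ hs ht hℓ hℓ0 (hcu.mono hsub) ?_
    (fun r => norm_nonneg _)
  intro r hr
  have hr1 := hsub hr
  have h1 : ‖∫ q in s..r, (ν q (ψ q) - ν q (χ q))‖ ≤ |∫ q in s..r, ℓ q * ‖ψ q - χ q‖| :=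
    fd_bound ((fd_ii hℓ hs hr1).mul_continuousOn (hcu.mono (uIcc_subset_Icc hs hr1)))
      fun q hq => hLip q (uIcc_subset_Icc hs hr1 hq) _ _
  have h2 := h r hr
  calc ‖ψ r - χ r‖ = ‖(ψ r - χ r - ∫ q in s..r, (ν q (ψ q) - ν q (χ q)))
        + ∫ q in s..r, (ν q (ψ q) - ν q (χ q))‖ := by rw [sub_add_cancel]
    _ ≤ _ := norm_add_le _ _
    _ ≤ _ := add_le_add h2 h1

/-- The derivative of `σ ↦ p σ` from a second-order estimate. -/
lemma fd_deriv {E : Type*} [NormedAddCommGroup E] [NormedSpace ℝ E]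
    {p e : ℝ → E} {B L : ℝ → ℝ} {τ K b' l' : ℝ} {e' : E}
    (hB : HasDerivAt B b' τ) (hL : HasDerivAt L l' τ) (he : HasDerivAt e e' τ)
    (h : ∀ᶠ σ in nhds τ, ‖p σ - p τ - (e σ - e τ)‖ ≤ K * |B σ - B τ| * |L σ - L τ|) :
    HasDerivAt p e' τ := by
  have h1 : (fun σ => p σ - p τ - (e σ - e τ)) =o[nhds τ] fun σ => σ - τ := by
    have h2 : (fun σ => p σ - p τ - (e σ - e τ)) =O[nhds τ]
        fun σ => (B σ - B τ) * (L σ - L τ) := by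
      refine Asymptotics.IsBigO.of_bound K ?_
      filter_upwards [h] with σ hσ
      rwa [norm_mul, Real.norm_eq_abs, Real.norm_eq_abs, ← mul_assoc]
    refine h2.trans_isLittleO ?_
    have h3 : (fun σ => B σ - B τ) =O[nhds τ] fun σ => σ - τ := hB.isBigO_sub
    have h4 : (fun σ => L σ - L τ) =o[nhds τ] fun _ => (1:ℝ) := by
      rw [Asymptotics.isLittleO_one_iff]
      simpa using (hL.continuousAt.tendsto.sub_const (L τ))
    simpa using h3.mul_isLittleO h4
  rw [hasDerivAt_iff_isLittleO] at he ⊢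
  have := h1.add he
  refine this.congr_left fun σ => ?_
  abel

/-- **Derivative of the flow with respect to the velocity field.**
`ν, η` are time-dependent `C¹` vector fields with `‖ν t x‖, ‖η t x‖ ≤ b t` and
`‖Dν(t,·)‖, ‖Dη(t,·)‖ ≤ ℓ t` for integrable `ℓ, b`, measurably depending on `t`.  For each
`ε`, `φ ε s t x` is the value at time `t` of the unique solution of
`ψ t = x + ∫_s^t (ν + εη)(r, ψ r) dr`, and `φ 0` is spatially `C¹`.  Then for all
`s, t ∈ [0,1]` and `x`, `ε ↦ φ ε s t x` is differentiable at `ε = 0` with derivative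
`∫_s^t Dφ(τ,t)(φ(s,τ,x)) ( η(τ, φ(s,τ,x)) ) dτ`. -/
theorem flow_derivative_wrt_velocity
    (n : ℕ)
    (ν η : ℝ → EuclideanSpace ℝ (Fin n) → EuclideanSpace ℝ (Fin n))
    (ℓ b : ℝ → ℝ)
    (hℓint : IntegrableOn ℓ (Icc (0:ℝ) 1))
    (hbint : IntegrableOn b (Icc (0:ℝ) 1))
    (hνmeas : ∀ x, AEStronglyMeasurable (fun t => ν t x) (volume.restrict (Icc (0:ℝ) 1)))
    (hηmeas : ∀ x, AEStronglyMeasurable (fun t => η t x) (volume.restrict (Icc (0:ℝ) 1)))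
    (hνC1 : ∀ t ∈ Icc (0:ℝ) 1, ContDiff ℝ 1 (ν t))
    (hηC1 : ∀ t ∈ Icc (0:ℝ) 1, ContDiff ℝ 1 (η t))
    (hνbd : ∀ t ∈ Icc (0:ℝ) 1, ∀ x, ‖ν t x‖ ≤ b t)
    (hηbd : ∀ t ∈ Icc (0:ℝ) 1, ∀ x, ‖η t x‖ ≤ b t)
    (hνder : ∀ t ∈ Icc (0:ℝ) 1, ∀ x, ‖fderiv ℝ (ν t) x‖ ≤ ℓ t)
    (hηder : ∀ t ∈ Icc (0:ℝ) 1, ∀ x, ‖fderiv ℝ (η t) x‖ ≤ ℓ t)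
    (φ : ℝ → ℝ → ℝ → EuclideanSpace ℝ (Fin n) → EuclideanSpace ℝ (Fin n))
    (hφcont : ∀ ε : ℝ, ∀ s ∈ Icc (0:ℝ) 1, ∀ x,
      ContinuousOn (fun t => φ ε s t x) (Icc (0:ℝ) 1))
    (hφ : ∀ ε : ℝ, ∀ s ∈ Icc (0:ℝ) 1, ∀ x, ∀ t ∈ Icc (0:ℝ) 1,
      φ ε s t x = x + ∫ r in s..t, (ν r (φ ε s r x) + ε • η r (φ ε s r x)))
    (hφC1 : ∀ s ∈ Icc (0:ℝ) 1, ∀ t ∈ Icc (0:ℝ) 1, ContDiff ℝ 1 (φ 0 s t)) :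
    ∀ s ∈ Icc (0:ℝ) 1, ∀ t ∈ Icc (0:ℝ) 1, ∀ x,
      HasDerivAt (fun ε => φ ε s t x)
        (∫ τ in s..t, (fderiv ℝ (φ 0 τ t) (φ 0 s τ x)) (η τ (φ 0 s τ x))) 0 := by
  classical
  have hLip : ∀ t ∈ Icc (0:ℝ) 1, ∀ x y, ‖ν t x - ν t y‖ ≤ ℓ t * ‖x - y‖ := fun t ht x y =>
    Convex.norm_image_sub_le_of_norm_fderiv_le (𝕜 := ℝ) (s := univ)
      (fun z _ => ((hνC1 t ht).differentiable one_ne_zero) z) (fun z _ => hνder t ht z)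
      convex_univ (mem_univ _) (mem_univ _)
  have hℓ0 : ∀ r ∈ Icc (0:ℝ) 1, 0 ≤ ℓ r := fun r hr => (norm_nonneg _).trans (hνder r hr 0)
  have hb0 : ∀ r ∈ Icc (0:ℝ) 1, 0 ≤ b r := fun r hr => (norm_nonneg _).trans (hνbd r hr 0)
  have hνI : ∀ ε : ℝ, ∀ s ∈ Icc (0:ℝ) 1, ∀ x,
      IntegrableOn (fun r => ν r (φ ε s r x)) (Icc (0:ℝ) 1) := fun ε s hs x =>
    fd_int hbint hνmeas (fun t ht => (hνC1 t ht).continuous) hνbd (hφcont ε s hs x)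
  have hηI : ∀ ε : ℝ, ∀ s ∈ Icc (0:ℝ) 1, ∀ x,
      IntegrableOn (fun r => η r (φ ε s r x)) (Icc (0:ℝ) 1) := fun ε s hs x =>
    fd_int hbint hηmeas (fun t ht => (hηC1 t ht).continuous) hηbd (hφcont ε s hs x)
  have hself : ∀ ε : ℝ, ∀ s ∈ Icc (0:ℝ) 1, ∀ x, φ ε s s x = x := fun ε s hs x => by
    rw [hφ ε s hs x s hs]; simp
  have hsplit : ∀ ε : ℝ, ∀ s ∈ Icc (0:ℝ) 1, ∀ x, ∀ σ ∈ Icc (0:ℝ) 1, ∀ τ ∈ Icc (0:ℝ) 1,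
      φ ε s τ x = φ ε s σ x + (∫ r in σ..τ, ν r (φ ε s r x))
        + ε • ∫ r in σ..τ, η r (φ ε s r x) := by
    intro ε s hs x σ hσ τ hτ
    have i1 := hνI ε s hs x
    have i2 := (hηI ε s hs x).smul ε
    have i3 := i1.add i2
    have e1 : ∫ r in s..τ, (ν r (φ ε s r x) + ε • η r (φ ε s r x)) =
      (∫ r in s..σ, (ν r (φ ε s r x) + ε • η r (φ ε s r x))) +
      ∫ r in σ..τ, (ν r (φ ε s r x) + ε • η r (φ ε s r x)) :=
      (intervalIntegral.integral_add_adjacent_intervals (fd_ii i3 hs hσ) (fd_ii i3 hσ hτ)).symm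
    have e2 : ∫ r in σ..τ, (ν r (φ ε s r x) + ε • η r (φ ε s r x)) =
      (∫ r in σ..τ, ν r (φ ε s r x)) + ε • ∫ r in σ..τ, η r (φ ε s r x) := by
      rw [← intervalIntegral.integral_smul]
      exact intervalIntegral.integral_add (fd_ii i1 hσ hτ) (fd_ii i2 hσ hτ)
    rw [hφ ε s hs x τ hτ, e1, e2, add_assoc, ← add_assoc x, ← hφ ε s hs x σ hσ]
  set C : ℝ := Real.exp (∫ q in (0:ℝ)..1, ℓ q) with hC
  have hC0 : 0 ≤ C := (Real.exp_pos _).le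
  have hηb : ∀ ε : ℝ, ∀ s ∈ Icc (0:ℝ) 1, ∀ x, ∀ σ ∈ Icc (0:ℝ) 1, ∀ τ ∈ Icc (0:ℝ) 1,
      ‖∫ r in σ..τ, η r (φ ε s r x)‖ ≤ |∫ r in σ..τ, b r| := fun ε s hs x σ hσ τ hτ =>
    fd_bound (fd_ii hbint hσ hτ) fun r hr => hηbd r (uIcc_subset_Icc hσ hτ hr) _
  -- comparison of the perturbed and unperturbed flows
  have key : ∀ ε : ℝ, ∀ s ∈ Icc (0:ℝ) 1, ∀ x, ∀ σ ∈ Icc (0:ℝ) 1, ∀ τ ∈ Icc (0:ℝ) 1,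
      ∀ r ∈ uIcc σ τ, ‖φ ε s r x - φ 0 σ r (φ ε s σ x)‖ ≤ |ε| * |∫ q in σ..τ, b q| * C := by
    intro ε s hs x σ hσ τ hτ
    refine fd_stab (by positivity) hσ hτ hℓint hℓ0 hLip (hφcont ε s hs x)
      (hφcont 0 σ hσ (φ ε s σ x)) ?_
    intro r hr
    have hr1 := uIcc_subset_Icc hσ hτ hr
    rw [intervalIntegral.integral_sub (fd_ii (hνI ε s hs x) hσ hr1)
      (fd_ii (hνI 0 σ hσ (φ ε s σ x)) hσ hr1)]
    have e1 := hsplit ε s hs x σ hσ r hr1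
    have e2 := hsplit 0 σ hσ (φ ε s σ x) σ hσ r hr1
    rw [hself 0 σ hσ, zero_smul, add_zero] at e2
    have e3 : φ ε s r x - φ 0 σ r (φ ε s σ x) - ((∫ q in σ..r, ν q (φ ε s q x)) -
        ∫ q in σ..r, ν q (φ 0 σ q (φ ε s σ x))) = ε • ∫ q in σ..r, η q (φ ε s q x) := by
      rw [e1, e2]; abel
    rw [e3, norm_smul, Real.norm_eq_abs]
    refine mul_le_mul_of_nonneg_left ((hηb ε s hs x σ hσ r hr1).trans ?_) (abs_nonneg _)
    refine intervalIntegral.abs_integral_mono_interval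
      (uIoc_subset_uIoc_of_uIcc_subset_uIcc (uIcc_subset_uIcc left_mem_uIcc hr)) ?_
      (fd_ii hbint hσ hτ)
    rw [EventuallyLE, ae_restrict_iff' measurableSet_uIoc]
    exact Eventually.of_forall fun q hq => hb0 q (uIcc_subset_Icc hσ hτ (uIoc_subset_uIcc hq))
  have flow : ∀ s ∈ Icc (0:ℝ) 1, ∀ x, ∀ σ ∈ Icc (0:ℝ) 1, ∀ τ ∈ Icc (0:ℝ) 1,
      φ 0 s τ x = φ 0 σ τ (φ 0 s σ x) := by
    intro s hs x σ hσ τ hτ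
    have := key 0 s hs x σ hσ τ hτ τ right_mem_uIcc
    rw [abs_zero, zero_mul, zero_mul] at this
    exact sub_eq_zero.1 (norm_le_zero_iff.1 this)
  have lip : ∀ τ ∈ Icc (0:ℝ) 1, ∀ t ∈ Icc (0:ℝ) 1, ∀ z w,
      ‖φ 0 τ t z - φ 0 τ t w‖ ≤ C * ‖z - w‖ := by
    intro τ hτ t ht z w
    rw [mul_comm]
    refine fd_stab (norm_nonneg (z - w)) hτ ht hℓint hℓ0 hLip (hφcont 0 τ hτ z)
      (hφcont 0 τ hτ w) ?_ t right_mem_uIcc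
    intro r hr
    have hr1 := uIcc_subset_Icc hτ ht hr
    rw [intervalIntegral.integral_sub (fd_ii (hνI 0 τ hτ z) hτ hr1)
      (fd_ii (hνI 0 τ hτ w) hτ hr1)]
    have e1 := hsplit 0 τ hτ z τ hτ r hr1
    have e2 := hsplit 0 τ hτ w τ hτ r hr1
    rw [hself 0 τ hτ, zero_smul, add_zero] at e1 e2
    apply le_of_eq
    congr 1
    rw [e1, e2]; abel
  have hD : ∀ τ ∈ Icc (0:ℝ) 1, ∀ t ∈ Icc (0:ℝ) 1, ∀ z, ‖fderiv ℝ (φ 0 τ t) z‖ ≤ C :=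
    fun τ hτ t ht z => norm_fderiv_le_of_lip' ℝ hC0
      (Eventually.of_forall fun w => lip τ hτ t ht w z)
  intro s hs t ht x
  have hsub := uIcc_subset_Icc hs ht
  -- the variation-of-constants formula
  have AG : ∀ ε : ℝ,
      AEStronglyMeasurable (fun τ => fderiv ℝ (φ 0 τ t) (φ ε s τ x) (ε • η τ (φ ε s τ x)))
        (volume.restrict (uIoc s t)) ∧
      ∫ τ in s..t, fderiv ℝ (φ 0 τ t) (φ ε s τ x) (ε • η τ (φ ε s τ x)) =
        φ ε s t x - φ 0 s t x := by
    intro ε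
    have hF : ∀ τ ∈ Icc (0:ℝ) 1, ∀ σ ∈ Icc (0:ℝ) 1,
        φ 0 σ t (φ ε s σ x) = φ 0 τ t (φ 0 σ τ (φ ε s σ x)) := fun τ hτ σ hσ =>
      flow σ hσ _ τ hτ t ht
    have main := fd_ftc (F := fun τ => φ 0 τ t (φ ε s τ x))
      (G := fun τ => fderiv ℝ (φ 0 τ t) (φ ε s τ x) (ε • η τ (φ ε s τ x)))
      (K := (C * C + C) * |ε|) (by positivity) (fd_ii hbint hs ht) ?_ ?_ ?_
    · simpa only [hself 0 t ht, hself ε s hs] using main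
    · intro τ hτ σ hσ
      rw [hF τ (hsub hτ) σ (hsub hσ)]
      refine (lip τ (hsub hτ) t ht _ _).trans ?_
      have h1 := key ε s hs x σ (hsub hσ) τ (hsub hτ) τ right_mem_uIcc
      calc C * ‖φ ε s τ x - φ 0 σ τ (φ ε s σ x)‖
          ≤ C * (|ε| * |∫ q in σ..τ, b q| * C) := by gcongr
        _ ≤ C * (|ε| * |∫ q in σ..τ, b q| * C) + C * |ε| * |∫ q in σ..τ, b q| := by
            have : 0 ≤ C * |ε| * |∫ q in σ..τ, b q| := by positivity
            linarith
        _ = _ := by ring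
    · have m0 : (0:ℝ) ∈ Icc (0:ℝ) 1 := by simp
      have m1 : (1:ℝ) ∈ Icc (0:ℝ) 1 := by simp
      have h01 : uIcc (0:ℝ) 1 = Icc 0 1 := uIcc_of_le zero_le_one
      have n0 : ∀ᵐ τ : ℝ, τ ≠ 0 := by simp [ae_iff, measure_singleton]
      have n1 : ∀ᵐ τ : ℝ, τ ≠ 1 := by simp [ae_iff, measure_singleton]
      filter_upwards [(fd_ii hbint m0 m1).ae_hasDerivAt_integral,
        (fd_ii hℓint m0 m1).ae_hasDerivAt_integral,
        (fd_ii (hηI ε s hs x) m0 m1).ae_hasDerivAt_integral, n0, n1] with τ hB hL hE h0 h1 hτ'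
      have hτ := hsub hτ'
      have hτu : τ ∈ uIcc (0:ℝ) 1 := by rwa [h01]
      have hnb : Icc (0:ℝ) 1 ∈ nhds τ :=
        Icc_mem_nhds (lt_of_le_of_ne hτ.1 (Ne.symm h0)) (lt_of_le_of_ne hτ.2 h1)
      have dB := hB hτu 0 left_mem_uIcc
      have dL := hL hτu 0 left_mem_uIcc
      have dE := (hE hτu 0 left_mem_uIcc).fun_const_smul ε
      have dp : HasDerivAt (fun σ => φ 0 σ τ (φ ε s σ x)) (ε • η τ (φ ε s τ x)) τ := by
        refine fd_deriv (K := |ε| * C) dB dL dE ?_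
        filter_upwards [hnb] with σ hσ
        rw [← smul_sub, intervalIntegral.integral_interval_sub_left (fd_ii (hηI ε s hs x) m0 hσ)
          (fd_ii (hηI ε s hs x) m0 hτ), intervalIntegral.integral_interval_sub_left
          (fd_ii hbint m0 hσ) (fd_ii hbint m0 hτ), intervalIntegral.integral_interval_sub_left
          (fd_ii hℓint m0 hσ) (fd_ii hℓint m0 hτ), hself 0 τ hτ]
        have e1 := hsplit ε s hs x σ hσ τ hτ
        have e2 := hsplit 0 σ hσ (φ ε s σ x) σ hσ τ hτ
        rw [hself 0 σ hσ, zero_smul, add_zero] at e2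
        have e3 : φ 0 σ τ (φ ε s σ x) - φ ε s τ x - ε • ∫ q in τ..σ, η q (φ ε s q x) =
            ∫ q in σ..τ, (ν q (φ 0 σ q (φ ε s σ x)) - ν q (φ ε s q x)) := by
          rw [intervalIntegral.integral_sub (fd_ii (hνI 0 σ hσ (φ ε s σ x)) hσ hτ)
            (fd_ii (hνI ε s hs x) hσ hτ), e1, e2, intervalIntegral.integral_symm σ τ, smul_neg]
          abel
        rw [e3]
        have hb2 := fd_bound (s := σ) (t := τ)
          (f := fun q => ν q (φ 0 σ q (φ ε s σ x)) - ν q (φ ε s q x))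
          (g := fun q => ℓ q * (|ε| * |∫ q in σ..τ, b q| * C))
          ((fd_ii hℓint hσ hτ).mul_const _) (fun q hq => by
            have hq1 := uIcc_subset_Icc hσ hτ hq
            refine (hLip q hq1 _ _).trans (mul_le_mul_of_nonneg_left ?_ (hℓ0 q hq1))
            rw [norm_sub_rev]
            exact key ε s hs x σ hσ τ hτ q hq)
        refine hb2.trans (le_of_eq ?_)
        rw [intervalIntegral.integral_mul_const, abs_mul,
          intervalIntegral.integral_symm σ τ, intervalIntegral.integral_symm σ τ, abs_neg, abs_neg,
          abs_of_nonneg (a := |ε| * _ * C) (by positivity)]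
        ring
      have dφ : HasFDerivAt (φ 0 τ t) (fderiv ℝ (φ 0 τ t) (φ ε s τ x))
          ((fun σ => φ 0 σ τ (φ ε s σ x)) τ) := by
        simp only [hself 0 τ hτ]
        exact ((hφC1 τ hτ t ht).differentiable one_ne_zero _).hasFDerivAt
      refine (dφ.comp_hasDerivAt τ dp).congr_of_eventuallyEq ?_
      filter_upwards [hnb] with σ hσ
      exact hF τ hτ σ hσ
    · intro τ hτ
      have hτ1 := hsub hτ
      refine (ContinuousLinearMap.le_of_opNorm_le _ (hD τ hτ1 t ht _) _).trans ?_
      rw [norm_smul, Real.norm_eq_abs]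
      have h1 := hηbd τ hτ1 (φ ε s τ x)
      have h2 := hb0 τ hτ1
      calc C * (|ε| * ‖η τ (φ ε s τ x)‖) ≤ C * (|ε| * b τ) := by gcongr
        _ ≤ C * (|ε| * b τ) + C * C * |ε| * b τ := by
            have : 0 ≤ C * C * |ε| * b τ := by positivity
            linarith
        _ = _ := by ring
  -- pass to the limit
  rw [hasDerivAt_iff_tendsto_slope]
  have hlim : Tendsto (fun ε : ℝ => ∫ τ in s..t, fderiv ℝ (φ 0 τ t) (φ ε s τ x) (η τ (φ ε s τ x)))
      (nhdsWithin 0 {0}ᶜ)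
      (nhds (∫ τ in s..t, (fderiv ℝ (φ 0 τ t) (φ 0 s τ x)) (η τ (φ 0 s τ x)))) := by
    refine intervalIntegral.tendsto_integral_filter_of_dominated_convergence (fun τ => C * b τ)
      ?_ ?_ ((fd_ii hbint hs ht).const_mul C) ?_
    · filter_upwards [self_mem_nhdsWithin] with ε hε
      have hε : ε ≠ 0 := hε
      refine ((AG ε).1.const_smul ε⁻¹).congr (Eventually.of_forall fun τ => ?_)
      simp [hε]
    · refine Eventually.of_forall fun ε => Eventually.of_forall fun τ hτ => ?_
      have hτ1 := hsub (uIoc_subset_uIcc hτ)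
      refine (ContinuousLinearMap.le_of_opNorm_le _ (hD τ hτ1 t ht _) _).trans ?_
      exact mul_le_mul_of_nonneg_left (hηbd τ hτ1 _) hC0
    · refine Eventually.of_forall fun τ hτ => ?_
      have hτ1 := hsub (uIoc_subset_uIcc hτ)
      have hy : Tendsto (fun ε => φ ε s τ x) (nhdsWithin 0 {0}ᶜ) (nhds (φ 0 s τ x)) := by
        refine Tendsto.mono_left ?_ nhdsWithin_le_nhds
        rw [tendsto_iff_norm_sub_tendsto_zero]
        refine squeeze_zero (fun _ => norm_nonneg _)
          (g := fun ε : ℝ => |ε| * |∫ q in s..τ, b q| * C) (fun ε => ?_) ?_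
        · have := key ε s hs x s hs τ hτ1 τ right_mem_uIcc
          rwa [hself ε s hs] at this
        · have : Continuous (fun ε : ℝ => |ε| * |∫ q in s..τ, b q| * C) := by fun_prop
          simpa using this.tendsto 0
      have c1 := ((hφC1 τ hτ1 t ht).continuous_fderiv one_ne_zero).clm_apply
        (hηC1 τ hτ1).continuous
      exact (c1.tendsto (φ 0 s τ x)).comp hy
  refine hlim.congr' ?_
  filter_upwards [self_mem_nhdsWithin] with ε hε
  have hε : ε ≠ 0 := hε
  rw [slope_def_module, sub_zero, ← (AG ε).2, ← intervalIntegral.integral_smul]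
  refine intervalIntegral.integral_congr fun τ _ => ?_
  simp [hε]
end

section
/- Under the same hypotheses as the derivative-of-the-flow result (ν, η time-dependent C¹ vector fields with integrable bounds, φ^ε the two-parameter flow of ν + εη, φ = φ⁰ spatially C¹), assume in addition that the linear maps Dφ(s,τ,y) are invertible for all s, τ ∈ [0,1] and y ∈ ℝⁿ. Then for all s, t ∈ [0,1] and x ∈ ℝⁿ, the map ε ↦ φ^ε(t,s,x) — where φ^ε(t,s,·) is the inverse of φ^ε(s,t,·) — is differentiable at ε = 0 with derivative −∫_s^t [ Dφ(s,τ, φ(t,s,x)) ]⁻¹ ( η(τ, φ(t,τ,x)) ) dτ. -/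
open MeasureTheory Set Filter
open scoped Topology

theorem ii_of_I {E : Type*} [NormedAddCommGroup E] {f : ℝ → E}
    (hf : IntegrableOn f (Icc (0:ℝ) 1)) {a d : ℝ} (ha : a ∈ Icc (0:ℝ) 1) (hd : d ∈ Icc (0:ℝ) 1) :
    IntervalIntegrable f volume a d :=
  (hf.mono_set (uIcc_subset_Icc ha hd)).intervalIntegrable

theorem uIoc_sub_I {a d : ℝ} (ha : a ∈ Icc (0:ℝ) 1) (hd : d ∈ Icc (0:ℝ) 1) :
    uIoc a d ⊆ Icc (0:ℝ) 1 := uIoc_subset_uIcc.trans (uIcc_subset_Icc ha hd)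

theorem norm_int_le {E : Type*} [NormedAddCommGroup E] [NormedSpace ℝ E] {f : ℝ → E} {g : ℝ → ℝ}
    (hg : IntegrableOn g (Icc (0:ℝ) 1)) {a d : ℝ} (ha : a ∈ Icc (0:ℝ) 1) (hd : d ∈ Icc (0:ℝ) 1)
    (h : ∀ t ∈ uIoc a d, ‖f t‖ ≤ g t) :
    ‖∫ t in a..d, f t‖ ≤ |∫ t in a..d, g t| := by
  apply intervalIntegral.norm_integral_le_abs_of_norm_le _ (ii_of_I hg ha hd)
  exact (ae_restrict_iff' measurableSet_uIoc).2 (Eventually.of_forall h)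

theorem ac_of_dist {E : Type*} [NormedAddCommGroup E] {f : ℝ → E} {B : ℝ → ℝ}
    (hB : IntegrableOn B (Icc (0:ℝ) 1))
    (h : ∀ x ∈ Icc (0:ℝ) 1, ∀ y ∈ Icc (0:ℝ) 1, ‖f x - f y‖ ≤ |∫ r in y..x, B r|) :
    AbsolutelyContinuousOnInterval f 0 1 := by
  have h0 : (0:ℝ) ∈ Icc (0:ℝ) 1 := by simp
  have h1 : (1:ℝ) ∈ Icc (0:ℝ) 1 := by simp
  have hG := (ii_of_I hB h0 h1).absolutelyContinuousOnInterval_intervalIntegral (c := 0) (by simp)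
  rw [absolutelyContinuousOnInterval_iff] at hG ⊢
  intro ε hε
  obtain ⟨δ, hδ, H⟩ := hG ε hε
  refine ⟨δ, hδ, fun E hE hs => lt_of_le_of_lt (Finset.sum_le_sum fun i hi => ?_) (H E hE hs)⟩
  have hm := hE.1 i (by simpa using hi)
  rw [uIcc_of_le zero_le_one] at hm
  rw [dist_eq_norm, Real.dist_eq, intervalIntegral.integral_interval_sub_left
    (ii_of_I hB h0 hm.1) (ii_of_I hB h0 hm.2)]
  exact h _ hm.1 _ hm.2

theorem ftc_I {E : Type*} [NormedAddCommGroup E] [NormedSpace ℝ E] [CompleteSpace E]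
    {f F : ℝ → E} {B : ℝ → ℝ}
    (hB : IntegrableOn B (Icc (0:ℝ) 1))
    (h : ∀ x ∈ Icc (0:ℝ) 1, ∀ y ∈ Icc (0:ℝ) 1, ‖f x - f y‖ ≤ |∫ r in y..x, B r|)
    (hd : ∀ᵐ x, x ∈ Icc (0:ℝ) 1 → HasDerivAt f (F x) x)
    (hFB : ∀ x ∈ Icc (0:ℝ) 1, ‖F x‖ ≤ B x) :
    IntegrableOn F (Icc (0:ℝ) 1) ∧ ∀ s ∈ Icc (0:ℝ) 1, ∀ t ∈ Icc (0:ℝ) 1,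
      ∫ r in s..t, F r = f t - f s := by
  have h0 : (0:ℝ) ∈ Icc (0:ℝ) 1 := by simp
  have h1 : (1:ℝ) ∈ Icc (0:ℝ) 1 := by simp
  have hF : IntegrableOn F (Icc (0:ℝ) 1) := by
    refine Integrable.mono' hB ?_ ((ae_restrict_iff' measurableSet_Icc).2 (Eventually.of_forall hFB))
    refine (aestronglyMeasurable_deriv f (volume.restrict (Icc (0:ℝ) 1))).congr ?_
    refine (ae_restrict_iff' measurableSet_Icc).2 ?_
    filter_upwards [hd] with x hx hxI using (hx hxI).deriv
  refine ⟨hF, ?_⟩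
  have hac := ac_of_dist hB h
  have hac2 : AbsolutelyContinuousOnInterval (fun x => ∫ r in (0:ℝ)..x, F r) 0 1 := by
    refine ac_of_dist hB fun x hx y hy => ?_
    rw [intervalIntegral.integral_interval_sub_left (ii_of_I hF h0 hx) (ii_of_I hF h0 hy)]
    exact norm_int_le hB hy hx fun t ht => hFB t (uIoc_sub_I hy hx ht)
  obtain ⟨C, hC⟩ := (hac.sub hac2).const_of_ae_hasDerivAt_zero (by
    filter_upwards [hd, (ii_of_I hF h0 h1).ae_hasDerivAt_integral] with x hx hx2 hxI
    have := (hx (by rwa [uIcc_of_le zero_le_one] at hxI)).sub (hx2 hxI 0 (by simp))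
    rwa [sub_self] at this)
  intro s hs t ht
  have e1 := hC s (by rwa [uIcc_of_le zero_le_one])
  have e2 := hC t (by rwa [uIcc_of_le zero_le_one])
  rw [← intervalIntegral.integral_interval_sub_left (ii_of_I hF h0 ht) (ii_of_I hF h0 hs)]
  simp only [Pi.sub_apply] at e1 e2
  rw [sub_eq_sub_iff_sub_eq_sub, ← neg_sub (f t), ← neg_sub (f s), e1, e2]

theorem gron {u l : ℝ → ℝ} (hl : IntegrableOn l (Icc (0:ℝ) 1)) (hl0 : ∀ x ∈ Icc (0:ℝ) 1, 0 ≤ l x)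
    (hu : ContinuousOn u (Icc (0:ℝ) 1)) (hu0 : ∀ x ∈ Icc (0:ℝ) 1, 0 ≤ u x)
    {a d A : ℝ} (ha : a ∈ Icc (0:ℝ) 1) (hd : d ∈ Icc (0:ℝ) 1)
    (h : ∀ r ∈ uIcc a d, u r ≤ A + |∫ x in a..r, l x * u x|) :
    u d ≤ A * Real.exp (∫ x in (0:ℝ)..1, l x) := by
  have h0 : (0:ℝ) ∈ Icc (0:ℝ) 1 := by simp
  have h1 : (1:ℝ) ∈ Icc (0:ℝ) 1 := by simp
  have hsub := uIcc_subset_Icc ha hd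
  set T := ∫ x in (0:ℝ)..1, l x with hT
  have habs : ∀ x ∈ Icc (0:ℝ) 1, ∀ y ∈ Icc (0:ℝ) 1, |∫ r in y..x, l r| ≤ T := by
    intro x hx y hy
    have := intervalIntegral.abs_integral_mono_interval (μ := volume) (f := l) (a := y) (b := x)
      (c := 0) (d := 1) (by rw [uIoc_of_le zero_le_one]; exact Ioc_subset_Ioc (le_min hy.1 hx.1) (max_le hy.2 hx.2))
      ((ae_restrict_iff' measurableSet_uIoc).2 (Eventually.of_forall fun r hr => hl0 r (uIoc_sub_I h0 h1 hr)))
      (ii_of_I hl h0 h1)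
    rwa [abs_of_nonneg (intervalIntegral.integral_nonneg zero_le_one hl0)] at this
  obtain ⟨σ, hσ, hσr⟩ : ∃ σ : ℝ, |σ| = 1 ∧ ∀ r ∈ uIcc a d, 0 ≤ σ * ∫ x in a..r, l x := by
    rcases le_total a d with had | had
    · refine ⟨1, by simp, fun r hr => ?_⟩
      rw [uIcc_of_le had] at hr
      rw [one_mul]
      exact intervalIntegral.integral_nonneg hr.1 fun x hx => hl0 x ⟨ha.1.trans hx.1, hx.2.trans (hr.2.trans hd.2)⟩
    · refine ⟨-1, by simp, fun r hr => ?_⟩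
      rw [uIcc_of_ge had] at hr
      rw [intervalIntegral.integral_symm, neg_mul_neg, one_mul]
      exact intervalIntegral.integral_nonneg hr.2 fun x hx => hl0 x ⟨hd.1.trans (hr.1.trans hx.1), hx.2.trans ha.2⟩
  set W : ℝ → ℝ := fun r => Real.exp (σ * ∫ x in a..r, l x) with hW
  have hexp : ∀ x y : ℝ, x ≤ T → y ≤ T → |Real.exp x - Real.exp y| ≤ Real.exp T * |x - y| := by
    intro x y hx hy
    have := (convex_Iic T).norm_image_sub_le_of_norm_deriv_le (f := Real.exp) (C := Real.exp T)
      (x := y) (y := x) (fun z _ => Real.differentiableAt_exp)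
      (fun z hz => by simpa using hz) hy hx
    simpa using this
  have hmT : ∀ x ∈ Icc (0:ℝ) 1, σ * ∫ r in a..x, l r ≤ T := fun x hx =>
    (le_abs_self _).trans (by rw [abs_mul, hσ, one_mul]; exact habs x hx a ha)
  have hWd : ∀ x ∈ Icc (0:ℝ) 1, ∀ y ∈ Icc (0:ℝ) 1, ‖W x - W y‖ ≤ |∫ r in y..x, Real.exp T * l r| := by
    intro x hx y hy
    refine (hexp _ _ (hmT x hx) (hmT y hy)).trans ?_
    rw [← mul_sub, intervalIntegral.integral_interval_sub_left (ii_of_I hl ha hx) (ii_of_I hl ha hy),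
      abs_mul, hσ, one_mul, intervalIntegral.integral_const_mul, abs_mul, abs_of_pos (Real.exp_pos _)]
  have hBi : IntegrableOn (fun r => Real.exp T * l r) (Icc (0:ℝ) 1) := Integrable.const_mul hl _
  have hWT : ∀ x ∈ Icc (0:ℝ) 1, W x ≤ Real.exp T := fun x hx => Real.exp_le_exp.2 (hmT x hx)
  have hWpos : ∀ x, 0 < W x := fun x => Real.exp_pos _
  obtain ⟨hWi, hWint⟩ := ftc_I (f := W) (F := fun r => W r * (σ * l r)) hBi hWd (by
      filter_upwards [(ii_of_I hl h0 h1).ae_hasDerivAt_integral] with x hx hxI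
      have := hx (by rwa [uIcc_of_le zero_le_one]) a (by rwa [uIcc_of_le zero_le_one])
      exact (this.const_mul σ).exp) (by
      intro x hx
      rw [norm_mul, norm_mul, Real.norm_eq_abs σ, hσ, one_mul, Real.norm_of_nonneg (hl0 x hx), Real.norm_of_nonneg (hWpos x).le]
      exact mul_le_mul_of_nonneg_right (hWT x hx) (hl0 x hx))
  have hWc : ContinuousOn W (uIcc a d) := by
    have := (ac_of_dist hBi hWd).continuousOn
    rw [uIcc_of_le zero_le_one] at this
    exact this.mono hsub
  obtain ⟨r, hr, hmax⟩ := isCompact_uIcc.exists_isMaxOn (nonempty_uIcc (a := a) (b := d))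
    ((hu.mono hsub).div hWc fun x _ => (hWpos x).ne')
  set M := u r / W r with hM
  have hle : ∀ x ∈ uIcc a d, u x ≤ M * W x := fun x hx => by
    have : u x / W x ≤ M := hmax hx
    rwa [div_le_iff₀ (hWpos x)] at this
  have hM0 : 0 ≤ M := div_nonneg (hu0 r (hsub hr)) (hWpos r).le
  have hint : |∫ x in a..r, l x * u x| ≤ M * (W r - 1) := by
    have hi : IntegrableOn (fun x => M * (l x * W x)) (Icc (0:ℝ) 1) := by
      refine Integrable.const_mul ?_ M
      have : IntegrableOn (fun x => l x * W x) (Icc (0:ℝ) 1) := by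
        refine hl.mul_continuousOn ?_ isCompact_Icc
        simpa [uIcc_of_le zero_le_one] using (ac_of_dist hBi hWd).continuousOn
      exact this
    have := norm_int_le (f := fun x => l x * u x) hi ha (hsub hr) (by
      intro x hx
      have hx' : x ∈ uIcc a d := uIcc_subset_uIcc_left hr (uIoc_subset_uIcc hx)
      rw [Real.norm_of_nonneg (mul_nonneg (hl0 x (hsub hx')) (hu0 x (hsub hx')))]
      have := mul_le_mul_of_nonneg_left (hle x hx') (hl0 x (hsub hx'))
      linarith)
    refine this.trans ?_
    have hWa : W a = 1 := by simp [hW]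
    have e := hWint a ha r (hsub hr)
    rw [hWa] at e
    have e2 : (∫ x in a..r, W x * (σ * l x)) = σ * ∫ x in a..r, l x * W x := by
      rw [← intervalIntegral.integral_const_mul]
      congr 1; ext x; ring
    rw [intervalIntegral.integral_const_mul, abs_mul, abs_of_nonneg hM0]
    refine mul_le_mul_of_nonneg_left ?_ hM0
    have : |∫ x in a..r, l x * W x| = |W r - 1| := by
      rw [← e, e2, abs_mul, hσ, one_mul]
    rw [this, abs_of_nonneg]
    have := Real.one_le_exp (hσr r hr)
    simp only [hW]; linarith
  have hMA : M ≤ A := by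
    have := h r hr
    have h3 : u r = M * W r := by rw [hM]; field_simp [(hWpos r).ne']
    nlinarith
  calc u d ≤ M * W d := hle d right_mem_uIcc
    _ ≤ A * Real.exp T := mul_le_mul hMA (hWT d hd) (hWpos d).le (hM0.trans hMA)

theorem carath {E : Type*} [NormedAddCommGroup E] {μ : Measure ℝ} {w : ℝ → E → E} {c : ℝ → E}
    (hw : ∀ x, AEStronglyMeasurable (fun t => w t x) μ) (hwc : ∀ᵐ t ∂μ, Continuous (w t))
    (hc : AEStronglyMeasurable c μ) : AEStronglyMeasurable (fun t => w t (c t)) μ := by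
  obtain ⟨g, hg, hcg⟩ := hc
  have : AEStronglyMeasurable (fun t => w t (g t)) μ := by
    refine aestronglyMeasurable_of_tendsto_ae atTop (f := fun n t => w t (hg.approx n t)) ?_ ?_
    · intro n
      have : (fun t => w t (hg.approx n t)) = fun t => ∑ v ∈ (hg.approx n).range,
          ((hg.approx n) ⁻¹' {v}).indicator (fun t => w t v) t := by
        classical
        ext t
        rw [Finset.sum_eq_single (hg.approx n t)]
        · simp
        · intro v _ hv
          simp [indicator, Ne.symm hv]
        · intro h; exact absurd (SimpleFunc.mem_range_self _ t) h
      rw [this]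
      refine Finset.aestronglyMeasurable_fun_sum _ fun v _ => ?_
      exact (hw v).indicator ((hg.approx n).measurableSet_fiber v)
    · filter_upwards [hwc] with t ht
      exact (ht.tendsto _).comp (hg.tendsto_approx t)
  refine this.congr ?_
  filter_upwards [hcg] with t ht
  rw [ht]

structure AdmField {E : Type*} [NormedAddCommGroup E] [NormedSpace ℝ E]
    (w : ℝ → E → E) (ℓ b : ℝ → ℝ) : Prop where
  lint : IntegrableOn ℓ (Icc (0:ℝ) 1)
  bint : IntegrableOn b (Icc (0:ℝ) 1)
  meas : ∀ x, AEStronglyMeasurable (fun t => w t x) (volume.restrict (Icc (0:ℝ) 1))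
  cont : ∀ t ∈ Icc (0:ℝ) 1, Continuous (w t)
  lip : ∀ t ∈ Icc (0:ℝ) 1, ∀ x y, ‖w t x - w t y‖ ≤ ℓ t * ‖x - y‖
  bd : ∀ t ∈ Icc (0:ℝ) 1, ∀ x, ‖w t x‖ ≤ b t
  lnn : ∀ t ∈ Icc (0:ℝ) 1, 0 ≤ ℓ t

theorem AdmField.bnn {E : Type*} [NormedAddCommGroup E] [NormedSpace ℝ E]
    {w : ℝ → E → E} {ℓ b : ℝ → ℝ} (h : AdmField w ℓ b) : ∀ t ∈ Icc (0:ℝ) 1, 0 ≤ b t :=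
  fun t ht => (norm_nonneg _).trans (h.bd t ht 0)

theorem AdmField.integ {E : Type*} [NormedAddCommGroup E] [NormedSpace ℝ E]
    {w : ℝ → E → E} {ℓ b : ℝ → ℝ} (h : AdmField w ℓ b) {p : ℝ → E}
    (hp : ContinuousOn p (Icc (0:ℝ) 1)) : IntegrableOn (fun r => w r (p r)) (Icc (0:ℝ) 1) := by
  refine Integrable.mono' h.bint ?_
    ((ae_restrict_iff' measurableSet_Icc).2 (Eventually.of_forall fun t ht => h.bd t ht _))
  exact carath h.meas ((ae_restrict_iff' measurableSet_Icc).2 (Eventually.of_forall h.cont))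
    (hp.aestronglyMeasurable measurableSet_Icc)

theorem abs_int_mono {b : ℝ → ℝ} (hb : IntegrableOn b (Icc (0:ℝ) 1))
    (hb0 : ∀ t ∈ Icc (0:ℝ) 1, 0 ≤ b t) {a d x y : ℝ}
    (ha : a ∈ Icc (0:ℝ) 1) (hd : d ∈ Icc (0:ℝ) 1) (hx : x ∈ uIcc a d) (hy : y ∈ uIcc a d) :
    |∫ r in x..y, b r| ≤ |∫ r in a..d, b r| := by
  refine intervalIntegral.abs_integral_mono_interval ?_
    ((ae_restrict_iff' measurableSet_uIoc).2 (Eventually.of_forall fun r hr => hb0 r (uIoc_sub_I ha hd hr)))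
    (ii_of_I hb ha hd)
  exact Ioc_subset_Ioc (le_min hx.1 hy.1) (max_le hx.2 hy.2)

theorem compare {E : Type*} [NormedAddCommGroup E] [NormedSpace ℝ E] [CompleteSpace E]
    {ν η : ℝ → E → E} {ℓ b : ℝ → ℝ} (hν : AdmField ν ℓ b) (hη : AdmField η ℓ b) {p q : ℝ → E}
    (hp : ContinuousOn p (Icc (0:ℝ) 1)) (hq : ContinuousOn q (Icc (0:ℝ) 1)) {ε a d : ℝ}
    (ha : a ∈ Icc (0:ℝ) 1) (hd : d ∈ Icc (0:ℝ) 1)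
    (hpe : ∀ r ∈ Icc (0:ℝ) 1, p r = p a + ∫ r in a..r, (ν r (p r) + ε • η r (p r)))
    (hqe : ∀ r ∈ Icc (0:ℝ) 1, q r = q a + ∫ r in a..r, ν r (q r)) :
    ‖p d - q d‖ ≤ (‖p a - q a‖ + |ε| * |∫ r in a..d, b r|) * Real.exp (∫ x in (0:ℝ)..1, ℓ x) := by
  refine gron (u := fun r => ‖p r - q r‖) hν.lint hν.lnn (hp.sub hq).norm (fun _ _ => norm_nonneg _) ha hd ?_
  intro r hr
  have hrI := uIcc_subset_Icc ha hd hr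
  have i1 := ii_of_I (hν.integ hp) ha hrI
  have i2 := ii_of_I (hη.integ hp) ha hrI
  have i2' : IntervalIntegrable (fun r => ε • η r (p r)) volume a r := i2.smul ε
  have i3 := ii_of_I (hν.integ hq) ha hrI
  have e : p r - q r = (p a - q a) + ε • (∫ r in a..r, η r (p r))
      + ∫ r in a..r, (ν r (p r) - ν r (q r)) := by
    rw [hpe r hrI, hqe r hrI, intervalIntegral.integral_add i1 i2',
      intervalIntegral.integral_sub i1 i3, intervalIntegral.integral_smul]
    abel
  have b1 : ‖∫ r in a..r, η r (p r)‖ ≤ |∫ r in a..d, b r| :=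
    (norm_int_le hη.bint ha hrI fun t ht => hη.bd t (uIoc_sub_I ha hrI ht) _).trans
      (abs_int_mono hη.bint hη.bnn ha hd left_mem_uIcc hr)
  have b2 : ‖∫ r in a..r, (ν r (p r) - ν r (q r))‖ ≤ |∫ x in a..r, ℓ x * ‖p x - q x‖| :=
    norm_int_le (hν.lint.mul_continuousOn (hp.sub hq).norm isCompact_Icc) ha hrI
      fun t ht => hν.lip t (uIoc_sub_I ha hrI ht) _ _
  calc ‖p r - q r‖ ≤ ‖p a - q a‖ + ‖ε • (∫ r in a..r, η r (p r))‖
      + ‖∫ r in a..r, (ν r (p r) - ν r (q r))‖ := by rw [e]; exact norm_add₃_le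
    _ ≤ _ := by
      rw [norm_smul, Real.norm_eq_abs]
      gcongr

theorem rebase {E : Type*} [NormedAddCommGroup E] [NormedSpace ℝ E] [CompleteSpace E]
    {g p : ℝ → E} (hg : IntegrableOn g (Icc (0:ℝ) 1)) {t a : ℝ} {x : E} (ht : t ∈ Icc (0:ℝ) 1)
    (ha : a ∈ Icc (0:ℝ) 1)
    (h : ∀ r ∈ Icc (0:ℝ) 1, p r = x + ∫ r in t..r, g r) :
    ∀ r ∈ Icc (0:ℝ) 1, p r = p a + ∫ r in a..r, g r := by
  intro r hr
  rw [h r hr, h a ha, add_assoc, intervalIntegral.integral_add_adjacent_intervals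
    (ii_of_I hg ht ha) (ii_of_I hg ha hr)]

/-- Pulled back curve derivative. -/
theorem main_aux {E : Type*} [NormedAddCommGroup E] [NormedSpace ℝ E] [CompleteSpace E]
    {ν η : ℝ → E → E} {ℓ b : ℝ → ℝ} (hν : AdmField ν ℓ b) (hη : AdmField η ℓ b)
    {Φ : ℝ → ℝ → E → E}
    (hc : ∀ s ∈ Icc (0:ℝ) 1, ∀ x, ContinuousOn (fun t => Φ s t x) (Icc (0:ℝ) 1))
    (hΦ : ∀ s ∈ Icc (0:ℝ) 1, ∀ x, ∀ t ∈ Icc (0:ℝ) 1, Φ s t x = x + ∫ r in s..t, ν r (Φ s r x))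
    (hC1 : ∀ s ∈ Icc (0:ℝ) 1, ∀ t ∈ Icc (0:ℝ) 1, ContDiff ℝ 1 (Φ s t))
    (hlaw : ∀ s ∈ Icc (0:ℝ) 1, ∀ t ∈ Icc (0:ℝ) 1, ∀ r ∈ Icc (0:ℝ) 1, ∀ x, Φ s r (Φ t s x) = Φ t r x)
    {L : ℝ} (hL : L = Real.exp (∫ x in (0:ℝ)..1, ℓ x))
    (hlip : ∀ s ∈ Icc (0:ℝ) 1, ∀ t ∈ Icc (0:ℝ) 1, ∀ x y, ‖Φ s t x - Φ s t y‖ ≤ L * ‖x - y‖)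
    (hDb : ∀ s ∈ Icc (0:ℝ) 1, ∀ t ∈ Icc (0:ℝ) 1, ∀ y, ‖fderiv ℝ (Φ s t) y‖ ≤ L)
    {p : ℝ → E} {ε : ℝ} (hp : ContinuousOn p (Icc (0:ℝ) 1))
    (hpe : ∀ a ∈ Icc (0:ℝ) 1, ∀ r ∈ Icc (0:ℝ) 1, p r = p a + ∫ r in a..r, (ν r (p r) + ε • η r (p r)))
    {s : ℝ} (hs : s ∈ Icc (0:ℝ) 1) :
    IntegrableOn (fun τ => ε • fderiv ℝ (Φ τ s) (p τ) (η τ (p τ))) (Icc (0:ℝ) 1) ∧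
    ∀ t ∈ Icc (0:ℝ) 1,
      ∫ τ in s..t, ε • fderiv ℝ (Φ τ s) (p τ) (η τ (p τ)) = Φ t s (p t) - p s := by
  have h0 : (0:ℝ) ∈ Icc (0:ℝ) 1 := by simp
  have h1 : (1:ℝ) ∈ Icc (0:ℝ) 1 := by simp
  have hL0 : 0 < L := hL ▸ Real.exp_pos _
  have hL1 : 1 ≤ L := by
    rw [hL]; exact Real.one_le_exp (intervalIntegral.integral_nonneg zero_le_one hν.lnn)
  have hself : ∀ σ ∈ Icc (0:ℝ) 1, ∀ x, Φ σ σ x = x := fun σ hσ x => by simpa using hΦ σ hσ x σ hσ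
  have hΦi : ∀ s ∈ Icc (0:ℝ) 1, ∀ x, ∀ r ∈ Icc (0:ℝ) 1, Φ s r x = Φ s s x + ∫ r in s..r, ν r (Φ s r x) :=
    fun s hs x r hr => by rw [hself s hs]; exact hΦ s hs x r hr
  -- basic comparison
  have hcmp : ∀ σ ∈ Icc (0:ℝ) 1, ∀ r ∈ Icc (0:ℝ) 1,
      ‖p r - Φ σ r (p σ)‖ ≤ L * (|ε| * |∫ r in σ..r, b r|) := by
    intro σ hσ r hr
    have := compare hν hη hp (hc σ hσ (p σ)) hσ hr (hpe σ hσ) (hΦi σ hσ (p σ))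
    rw [hself σ hσ, sub_self, norm_zero, zero_add, ← hL] at this
    linarith
  have hz : ∀ σ ∈ Icc (0:ℝ) 1, ∀ τ ∈ Icc (0:ℝ) 1, Φ σ s (p σ) = Φ τ s (Φ σ τ (p σ)) :=
    fun σ hσ τ hτ => (hlaw τ hτ σ hσ s hs _).symm
  have hBi : IntegrableOn (fun r => L * (L * |ε|) * b r) (Icc (0:ℝ) 1) := Integrable.const_mul hν.bint _
  have key := ftc_I (f := fun σ => Φ σ s (p σ))
    (F := fun τ => ε • fderiv ℝ (Φ τ s) (p τ) (η τ (p τ))) hBi ?_ ?_ ?_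
  · refine ⟨key.1, fun t ht => ?_⟩
    rw [key.2 s hs t ht]
    simp only [hself s hs]
  · intro σ hσ τ hτ
    rw [hz σ hσ τ hτ, intervalIntegral.integral_const_mul, abs_mul, abs_of_nonneg (by positivity)]
    refine (hlip τ hτ s hs _ _).trans ?_
    rw [mul_assoc L]
    refine mul_le_mul_of_nonneg_left ?_ hL0.le
    rw [norm_sub_rev]
    refine (hcmp σ hσ τ hτ).trans (le_of_eq ?_)
    rw [intervalIntegral.integral_symm, abs_neg, mul_assoc]
  · have n0 : ∀ᵐ x : ℝ, x ≠ 0 := by simp [ae_iff, measure_singleton]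
    have n1 : ∀ᵐ x : ℝ, x ≠ 1 := by simp [ae_iff, measure_singleton]
    filter_upwards [n0, n1, (ii_of_I hν.lint h0 h1).ae_hasDerivAt_integral,
      (ii_of_I hν.bint h0 h1).ae_hasDerivAt_integral,
      (ii_of_I (hη.integ hp) h0 h1).ae_hasDerivAt_integral] with τ hτ0 hτ1 dl db dη hτ
    have hτu : τ ∈ uIcc (0:ℝ) 1 := by rwa [uIcc_of_le zero_le_one]
    replace dl := dl hτu τ hτu
    replace db := db hτu τ hτu
    replace dη := dη hτu τ hτu
    have hnhds : Icc (0:ℝ) 1 ∈ 𝓝 τ := Icc_mem_nhds (lt_of_le_of_ne hτ.1 hτ0.symm) (lt_of_le_of_ne hτ.2 hτ1)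
    have hw : HasDerivAt (fun σ => Φ σ τ (p σ)) (ε • η τ (p τ)) τ := by
      have hR : HasDerivAt (fun σ => Φ σ τ (p σ) - ε • ∫ r in τ..σ, η r (p r)) 0 τ := by
        have hP := (dl.mul db)
        simp only [intervalIntegral.integral_same, mul_zero, zero_mul, add_zero] at hP
        rw [hasDerivAt_iff_isLittleO] at hP ⊢
        refine Asymptotics.IsBigO.trans_isLittleO ?_ hP
        refine Asymptotics.IsBigO.of_bound (L * |ε|) ?_
        filter_upwards [hnhds] with σ hσ
        simp only [intervalIntegral.integral_same, smul_zero, sub_zero, mul_zero, hself τ hτ, Pi.mul_apply]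
        have j1 := ii_of_I (hν.integ hp) hτ hσ
        have j2 : IntervalIntegrable (fun r => ε • η r (p r)) volume τ σ := (ii_of_I (hη.integ hp) hτ hσ).smul ε
        have j3 := ii_of_I (hν.integ (hc σ hσ (p σ))) hτ hσ
        have e : Φ σ τ (p σ) - ε • (∫ r in τ..σ, η r (p r)) - p τ
            = ∫ r in τ..σ, (ν r (p r) - ν r (Φ σ r (p σ))) := by
          rw [hΦ σ hσ (p σ) τ hτ, intervalIntegral.integral_sub j1 j3, intervalIntegral.integral_symm τ σ]
          nth_rewrite 1 [hpe τ hτ σ hσ]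
          rw [intervalIntegral.integral_add j1 j2, intervalIntegral.integral_smul]
          abel
        rw [e]
        have hci : IntegrableOn (fun r => (L * (|ε| * |∫ r in τ..σ, b r|)) * ℓ r) (Icc (0:ℝ) 1) :=
          Integrable.const_mul hν.lint _
        refine (norm_int_le hci hτ hσ fun r hr => ?_).trans (le_of_eq ?_)
        · have hrI := uIoc_sub_I hτ hσ hr
          refine (hν.lip r hrI _ _).trans ?_
          rw [mul_comm]
          refine mul_le_mul_of_nonneg_right ((hcmp σ hσ r hrI).trans ?_) (hν.lnn r hrI)
          refine mul_le_mul_of_nonneg_left (mul_le_mul_of_nonneg_left ?_ (abs_nonneg _)) hL0.le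
          exact abs_int_mono hν.bint hν.bnn hτ hσ right_mem_uIcc (uIoc_subset_uIcc hr)
        · rw [intervalIntegral.integral_const_mul, abs_mul, norm_mul, Real.norm_eq_abs, Real.norm_eq_abs,
            abs_of_nonneg (by positivity)]
          ring
      have := hR.add (dη.const_smul ε)
      rw [zero_add] at this
      refine this.congr_of_eventuallyEq (Eventually.of_forall fun σ => ?_)
      simp
    have hwτ : Φ τ τ (p τ) = p τ := hself τ hτ _
    have hD : HasFDerivAt (Φ τ s) (fderiv ℝ (Φ τ s) (p τ)) (Φ τ τ (p τ)) := by
      rw [hwτ]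
      exact ((hC1 τ hτ s hs).differentiable (by simp)).differentiableAt.hasFDerivAt
    have := hD.comp_hasDerivAt τ hw
    rw [map_smul] at this
    refine this.congr_of_eventuallyEq ?_
    filter_upwards [hnhds] with σ hσ using hz σ hσ τ hτ
  · intro τ hτ
    rw [norm_smul, Real.norm_eq_abs]
    have q1 : ‖fderiv ℝ (Φ τ s) (p τ) (η τ (p τ))‖ ≤ L * b τ :=
      (ContinuousLinearMap.le_opNorm _ _).trans
        (mul_le_mul (hDb τ hτ s hs _) (hη.bd τ hτ _) (norm_nonneg _) hL0.le)
    have hb0 := hν.bnn τ hτ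
    calc _ ≤ |ε| * (L * b τ) := by gcongr
      _ = 1 * (L * |ε|) * b τ := by ring
      _ ≤ _ := by gcongr


/-- **Derivative of the inverse flow with respect to the velocity field.**
Under the same hypotheses as the derivative-of-the-flow result (`ν, η` time-dependent `C¹`
vector fields with integrable bounds, `φ ε` the two-parameter flow of `ν + εη`, `φ 0`
spatially `C¹`), assume in addition that the spatial derivatives `Dφ(s,τ)(y)` are invertible
for all `s, τ ∈ [0,1]` and `y`.  Then for all `s, t ∈ [0,1]` and `x`, the map
`ε ↦ φ ε t s x` (the inverse flow) is differentiable at `ε = 0` with derivative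
`−∫_s^t [Dφ(s,τ)(φ(t,s,x))]⁻¹ ( η(τ, φ(t,τ,x)) ) dτ`. -/
theorem inverse_flow_derivative_wrt_velocity
    (n : ℕ)
    (ν η : ℝ → EuclideanSpace ℝ (Fin n) → EuclideanSpace ℝ (Fin n))
    (ℓ b : ℝ → ℝ)
    (hℓint : IntegrableOn ℓ (Icc (0:ℝ) 1))
    (hbint : IntegrableOn b (Icc (0:ℝ) 1))
    (hνmeas : ∀ x, AEStronglyMeasurable (fun t => ν t x) (volume.restrict (Icc (0:ℝ) 1)))
    (hηmeas : ∀ x, AEStronglyMeasurable (fun t => η t x) (volume.restrict (Icc (0:ℝ) 1)))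
    (hνC1 : ∀ t ∈ Icc (0:ℝ) 1, ContDiff ℝ 1 (ν t))
    (hηC1 : ∀ t ∈ Icc (0:ℝ) 1, ContDiff ℝ 1 (η t))
    (hνbd : ∀ t ∈ Icc (0:ℝ) 1, ∀ x, ‖ν t x‖ ≤ b t)
    (hηbd : ∀ t ∈ Icc (0:ℝ) 1, ∀ x, ‖η t x‖ ≤ b t)
    (hνder : ∀ t ∈ Icc (0:ℝ) 1, ∀ x, ‖fderiv ℝ (ν t) x‖ ≤ ℓ t)
    (hηder : ∀ t ∈ Icc (0:ℝ) 1, ∀ x, ‖fderiv ℝ (η t) x‖ ≤ ℓ t)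
    (φ : ℝ → ℝ → ℝ → EuclideanSpace ℝ (Fin n) → EuclideanSpace ℝ (Fin n))
    (hφcont : ∀ ε : ℝ, ∀ s ∈ Icc (0:ℝ) 1, ∀ x,
      ContinuousOn (fun t => φ ε s t x) (Icc (0:ℝ) 1))
    (hφ : ∀ ε : ℝ, ∀ s ∈ Icc (0:ℝ) 1, ∀ x, ∀ t ∈ Icc (0:ℝ) 1,
      φ ε s t x = x + ∫ r in s..t, (ν r (φ ε s r x) + ε • η r (φ ε s r x)))
    (hφC1 : ∀ s ∈ Icc (0:ℝ) 1, ∀ t ∈ Icc (0:ℝ) 1, ContDiff ℝ 1 (φ 0 s t))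
    (hinv : ∀ s ∈ Icc (0:ℝ) 1, ∀ τ ∈ Icc (0:ℝ) 1, ∀ y,
      ∃ e : EuclideanSpace ℝ (Fin n) ≃L[ℝ] EuclideanSpace ℝ (Fin n),
        (e : EuclideanSpace ℝ (Fin n) →L[ℝ] EuclideanSpace ℝ (Fin n))
          = fderiv ℝ (φ 0 s τ) y) :
    ∀ s ∈ Icc (0:ℝ) 1, ∀ t ∈ Icc (0:ℝ) 1, ∀ x,
      HasDerivAt (fun ε => φ ε t s x)
        (-∫ τ in s..t,
          ((fderiv ℝ (φ 0 s τ) (φ 0 t s x)).inverse) (η τ (φ 0 t τ x))) 0 := by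
  intro s hs t ht x
  have mk : ∀ w : ℝ → EuclideanSpace ℝ (Fin n) → EuclideanSpace ℝ (Fin n),
      (∀ x, AEStronglyMeasurable (fun t => w t x) (volume.restrict (Icc (0:ℝ) 1))) →
      (∀ t ∈ Icc (0:ℝ) 1, ContDiff ℝ 1 (w t)) → (∀ t ∈ Icc (0:ℝ) 1, ∀ x, ‖w t x‖ ≤ b t) →
      (∀ t ∈ Icc (0:ℝ) 1, ∀ x, ‖fderiv ℝ (w t) x‖ ≤ ℓ t) → AdmField w ℓ b := by
    intro w h1 h2 h3 h4
    refine ⟨hℓint, hbint, h1, fun t ht => (h2 t ht).continuous, fun t ht x y => ?_, h3,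
      fun t ht => (norm_nonneg _).trans (h4 t ht 0)⟩
    exact convex_univ.norm_image_sub_le_of_norm_fderiv_le
      (fun z _ => ((h2 t ht).differentiable (by simp)).differentiableAt)
      (fun z _ => h4 t ht z) (mem_univ y) (mem_univ x)
  have hν := mk ν hνmeas hνC1 hνbd hνder
  have hη := mk η hηmeas hηC1 hηbd hηder
  clear mk
  set L := Real.exp (∫ x in (0:ℝ)..1, ℓ x) with hL
  have hL0 : 0 < L := Real.exp_pos _
  have hself : ∀ ε, ∀ σ ∈ Icc (0:ℝ) 1, ∀ x, φ ε σ σ x = x := fun ε σ hσ x => by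
    simpa using hφ ε σ hσ x σ hσ
  have hpint : ∀ ε : ℝ, ∀ {p : ℝ → EuclideanSpace ℝ (Fin n)}, ContinuousOn p (Icc (0:ℝ) 1) →
      IntegrableOn (fun r => ν r (p r) + ε • η r (p r)) (Icc (0:ℝ) 1) := fun ε p hp =>
    Integrable.add (hν.integ hp) (by have := Integrable.smul ε (hη.integ hp); simpa only [Pi.smul_def] using this)
  have hpe : ∀ ε : ℝ, ∀ t ∈ Icc (0:ℝ) 1, ∀ x, ∀ a ∈ Icc (0:ℝ) 1, ∀ r ∈ Icc (0:ℝ) 1,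
      φ ε t r x = φ ε t a x + ∫ r in a..r, (ν r (φ ε t r x) + ε • η r (φ ε t r x)) :=
    fun ε t ht x a ha => rebase (p := fun r => φ ε t r x) (hpint ε (hφcont ε t ht x)) ht ha
      (fun r hr => hφ ε t ht x r hr)
  have hqe : ∀ t ∈ Icc (0:ℝ) 1, ∀ x, ∀ a ∈ Icc (0:ℝ) 1, ∀ r ∈ Icc (0:ℝ) 1,
      φ 0 t r x = φ 0 t a x + ∫ r in a..r, ν r (φ 0 t r x) := by
    intro t ht x a ha r hr
    simpa using hpe 0 t ht x a ha r hr
  have hlaw : ∀ s ∈ Icc (0:ℝ) 1, ∀ t ∈ Icc (0:ℝ) 1, ∀ r ∈ Icc (0:ℝ) 1, ∀ x,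
      φ 0 s r (φ 0 t s x) = φ 0 t r x := by
    intro s hs t ht r hr x
    have := compare hν hη (hφcont 0 s hs (φ 0 t s x)) (hφcont 0 t ht x) hs hr
      (hpe 0 s hs (φ 0 t s x) s hs) (hqe t ht x s hs)
    rw [hself 0 s hs] at this
    simp only [sub_self, norm_zero, abs_zero, zero_mul, add_zero] at this
    exact sub_eq_zero.1 (norm_le_zero_iff.1 this)
  have hlip : ∀ s ∈ Icc (0:ℝ) 1, ∀ t ∈ Icc (0:ℝ) 1, ∀ x y,
      ‖φ 0 s t x - φ 0 s t y‖ ≤ L * ‖x - y‖ := by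
    intro s hs t ht x y
    have := compare hν hη (hφcont 0 s hs x) (hφcont 0 s hs y) hs ht
      (hpe 0 s hs x s hs) (hqe s hs y s hs)
    rw [hself 0 s hs, hself 0 s hs] at this
    simp only [abs_zero, zero_mul, add_zero] at this
    linarith
  have hDb : ∀ s ∈ Icc (0:ℝ) 1, ∀ t ∈ Icc (0:ℝ) 1, ∀ y, ‖fderiv ℝ (φ 0 s t) y‖ ≤ L :=
    fun s hs t ht y => norm_fderiv_le_of_lip' ℝ hL0.le
      (Eventually.of_forall fun z => hlip s hs t ht z y)
  have hmain := fun ε => main_aux hν hη (hφcont 0)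
    (fun s hs x t ht => by simpa [hself 0 s hs] using hqe s hs x s hs t ht) hφC1 hlaw hL hlip hDb
    (hφcont ε t ht x) (hpe ε t ht x) hs
  have hconv : ∀ τ ∈ Icc (0:ℝ) 1, Tendsto (fun ε => φ ε t τ x) (𝓝[≠] 0) (𝓝 (φ 0 t τ x)) := by
    intro τ hτ
    refine Tendsto.mono_left ?_ nhdsWithin_le_nhds
    rw [tendsto_iff_norm_sub_tendsto_zero]
    have hb : Tendsto (fun ε : ℝ => |ε| * |∫ r in t..τ, b r| * L) (𝓝 0) (𝓝 0) := by
      have : Continuous (fun ε : ℝ => |ε| * |∫ r in t..τ, b r| * L) := by fun_prop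
      simpa using this.tendsto 0
    refine squeeze_zero (fun _ => norm_nonneg _) (fun ε => ?_) hb
    have := compare hν hη (hφcont ε t ht x) (hφcont 0 t ht x) ht hτ
      (hpe ε t ht x t ht) (hqe t ht x t ht)
    rw [hself ε t ht, hself 0 t ht] at this
    simpa using this
  have hlim : Tendsto (fun ε => ∫ τ in s..t, fderiv ℝ (φ 0 τ s) (φ ε t τ x) (η τ (φ ε t τ x))) (𝓝[≠] 0)
      (𝓝 (∫ τ in s..t, ((fderiv ℝ (φ 0 s τ) (φ 0 t s x)).inverse) (η τ (φ 0 t τ x)))) := by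
    refine intervalIntegral.tendsto_integral_filter_of_dominated_convergence (fun τ => L * b τ) ?_ ?_ ?_ ?_
    · filter_upwards [self_mem_nhdsWithin] with ε hε
      have h2 := ((hmain ε).1.mono_set (uIoc_sub_I hs ht)).aestronglyMeasurable.const_smul ε⁻¹
      refine h2.congr (Eventually.of_forall fun τ => ?_)
      exact inv_smul_smul₀ hε _
    · refine Eventually.of_forall fun ε => Eventually.of_forall fun τ hτ => ?_
      have hτ := uIoc_sub_I hs ht hτ
      exact (ContinuousLinearMap.le_opNorm _ _).trans
        (mul_le_mul (hDb τ hτ s hs _) (hη.bd τ hτ _) (norm_nonneg _) hL0.le)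
    · exact (ii_of_I hbint hs ht).const_mul L
    · refine Eventually.of_forall fun τ hτ => ?_
      have hτ := uIoc_sub_I hs ht hτ
      have hinv' : (fderiv ℝ (φ 0 s τ) (φ 0 t s x)).inverse = fderiv ℝ (φ 0 τ s) (φ 0 t τ x) := by
        obtain ⟨e, he⟩ := hinv s hs τ hτ (φ 0 t s x)
        rw [← he, ContinuousLinearMap.inverse_equiv]
        have d1 : HasFDerivAt (φ 0 s τ) (e : EuclideanSpace ℝ (Fin n) →L[ℝ] EuclideanSpace ℝ (Fin n)) (φ 0 t s x) := by
          rw [he]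
          exact ((hφC1 s hs τ hτ).differentiable (by simp)).differentiableAt.hasFDerivAt
        have d2 : HasFDerivAt (φ 0 τ s) (fderiv ℝ (φ 0 τ s) (φ 0 t τ x)) (φ 0 s τ (φ 0 t s x)) := by
          rw [hlaw s hs t ht τ hτ]
          exact ((hφC1 τ hτ s hs).differentiable (by simp)).differentiableAt.hasFDerivAt
        have d3 := d2.comp _ d1
        have hid : (φ 0 τ s) ∘ (φ 0 s τ) = id := by
          ext1 y
          simp only [Function.comp, id]
          rw [hlaw τ hτ s hs s hs, hself 0 s hs]
        rw [hid] at d3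
        have d4 := d3.unique (hasFDerivAt_id _)
        ext1 v
        have := congrArg (fun T => T (e.symm v)) d4
        simpa using this.symm
      rw [hinv']
      have c1 : Continuous (fun y => fderiv ℝ (φ 0 τ s) y (η τ y)) :=
        ((hφC1 τ hτ s hs).continuous_fderiv (by simp)).clm_apply (hη.cont τ hτ)
      exact (c1.tendsto _).comp (hconv τ hτ)
  rw [hasDerivAt_iff_tendsto_slope]
  refine hlim.neg.congr' ?_
  filter_upwards [self_mem_nhdsWithin] with ε hε
  have h3 := (hmain ε).2 t ht
  rw [intervalIntegral.integral_smul, hself ε t ht] at h3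
  rw [slope_def_module, sub_zero, ← neg_sub (φ 0 t s x), ← h3, smul_neg, inv_smul_smul₀ hε]
end
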